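/- (Qubit two-sample universal test.) Let ρ and σ be density matrices on ℂ². With m = 3n_1 and n = 3n_2, construct σ̂_m = (1/2)·(I₂ + Σ_K r̂_K σ_K) from n_1 i.i.d. [−1,1]-valued samples per Pauli axis with means Tr[σ_K σ], and ρ̂_n = (1/2)·(I₂ + Σ_K ŝ_K σ_K) from n_2 i.i.d. [−1,1]-valued samples per Pauli axis with means Tr[σ_K ρ], all samples mutually independent. Let k = min{m, n}, let α ∈ (0,1), set c = √(216·ln(12/α)/k), and accept H₀ iff ‖σ̂_m − ρ̂_n‖₁ ≤ c. Then: (i) if σ = ρ, the probability of rejecting H₀ is at most α; and (ii) if σ ≠ ρ and c < ‖ρ − σ‖₁, the probability of accepting H₀ is at most 12·exp(−k·(‖ρ − σ‖₁ − c)²/216). -/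

import Mathlib

open Matrix MeasureTheory ProbabilityTheory
open scoped ComplexOrder

/-- The positive semidefinite square root of a matrix (junk value `0` if the matrix is not
positive semidefinite). -/
noncomputable def matSqrt {d : ℕ} (A : Matrix (Fin d) (Fin d) ℂ) : Matrix (Fin d) (Fin d) ℂ :=
  open scoped Classical in
  if h : A.PosSemidef then
    (h.1.eigenvectorUnitary : Matrix (Fin d) (Fin d) ℂ) *
      diagonal ((RCLike.ofReal : ℝ → ℂ) ∘ Real.sqrt ∘ h.1.eigenvalues) *
      (star h.1.eigenvectorUnitary : Matrix (Fin d) (Fin d) ℂ)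
  else 0

/-- The trace norm `‖A‖₁ = Tr[√(A†A)]`. -/
noncomputable def traceNorm {d : ℕ} (A : Matrix (Fin d) (Fin d) ℂ) : ℝ :=
  (matSqrt (Aᴴ * A)).trace.re

/-- The three Pauli matrices `σ_X, σ_Y, σ_Z`. -/
noncomputable def pauli : Fin 3 → Matrix (Fin 2) (Fin 2) ℂ :=
  ![!![0, 1; 1, 0], !![0, -Complex.I; Complex.I, 0], !![1, 0; 0, -1]]

/-!
The proof works with Bloch vectors. A traceless Hermitian qubit operator `A = ½ t·σ` satisfies
`Aᴴ A = (‖t‖ / 2)² I`, so passing to Bloch vectors turns the trace distance into the Euclidean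
distance of `ℝ³`, and the test compares two empirical means there. Hoeffding's inequality on each
axis at scale `δ / √3` shows that the mean of `N` samples per axis misses its target by `δ` with
probability at most `6 exp (-N δ² / 6)`. If the estimated trace distance is off by `ε`, one of the
two means is off by `ε / 2`, which has probability at most `12 exp (-k ε² / 72)` because
`N ≥ k / 3`. The type I error is the case `ε = c` and the type II error the case
`ε = ‖ρ - σ‖₁ - c`. The constant `216 = 3 · 72` is what the cruder scale `δ / 3` would give.
-/

section TraceNorm

open scoped MatrixOrder Matrix.Norms.L2Operator

lemma matSqrt_mul_self {d : ℕ} {B : Matrix (Fin d) (Fin d) ℂ} (hB : B.PosSemidef) :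
    matSqrt (B * B) = B := by
  have hBB : (B * B).PosSemidef := by
    simpa only [hB.isHermitian.eq] using posSemidef_conjTranspose_mul_self B
  have hcfc : matSqrt (B * B) = hBB.isHermitian.cfc Real.sqrt := by
    rw [matSqrt, dif_pos hBB, IsHermitian.cfc, Unitary.conjStarAlgAut_apply]
  rw [hcfc, ← hBB.isHermitian.cfc_eq, ← cfcₙ_eq_cfc,
    ← CFC.sqrt_eq_real_sqrt _ hBB.nonneg, CFC.sqrt_mul_self B hB.nonneg]

lemma traceNorm_eq_trace_re {d : ℕ} {A B : Matrix (Fin d) (Fin d) ℂ} (hB : B.PosSemidef)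
    (hAB : Aᴴ * A = B * B) : traceNorm A = B.trace.re := by
  rw [traceNorm, hAB, matSqrt_mul_self hB]

end TraceNorm

section Bloch

/-- The operator `t·σ = t_X σ_X + t_Y σ_Y + t_Z σ_Z`. -/
noncomputable def pauliVec (t : EuclideanSpace ℝ (Fin 3)) : Matrix (Fin 2) (Fin 2) ℂ :=
  ∑ K, (t K : ℂ) • pauli K

/-- The Hermitian operator of trace one with Bloch vector `r`; it is a state when `‖r‖ ≤ 1`, which
is not required since estimated Bloch vectors may leave the unit ball. -/
noncomputable def blochMatrix (r : EuclideanSpace ℝ (Fin 3)) : Matrix (Fin 2) (Fin 2) ℂ :=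
  (1 / 2 : ℂ) • (1 + pauliVec r)

/-- The Bloch vector `(Tr[σ_X ρ], Tr[σ_Y ρ], Tr[σ_Z ρ])` of a qubit operator, with real parts
taken (the traces are real for Hermitian `ρ`). -/
noncomputable def blochVector (ρ : Matrix (Fin 2) (Fin 2) ℂ) : EuclideanSpace ℝ (Fin 3) :=
  WithLp.toLp 2 fun K => (pauli K * ρ).trace.re

lemma pauliVec_sub (s t : EuclideanSpace ℝ (Fin 3)) :
    pauliVec (s - t) = pauliVec s - pauliVec t := by
  simp only [pauliVec, PiLp.sub_apply, Complex.ofReal_sub, sub_smul, Finset.sum_sub_distrib]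

lemma isHermitian_pauli (K : Fin 3) : (pauli K).IsHermitian := by
  ext i j
  fin_cases K <;> fin_cases i <;> fin_cases j <;> simp [pauli]

lemma isHermitian_pauliVec (t : EuclideanSpace ℝ (Fin 3)) : (pauliVec t).IsHermitian := by
  simp only [IsHermitian, pauliVec, conjTranspose_sum, conjTranspose_smul, Complex.star_def,
    Complex.conj_ofReal, (isHermitian_pauli _).eq]

lemma pauliVec_eq (t : EuclideanSpace ℝ (Fin 3)) :
    pauliVec t = !![(t 2 : ℂ), t 0 - t 1 * Complex.I; t 0 + t 1 * Complex.I, -t 2] := by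
  ext i j
  fin_cases i <;> fin_cases j <;> simp [pauliVec, pauli, Fin.sum_univ_three, sub_eq_add_neg]

lemma pauliVec_mul_self (t : EuclideanSpace ℝ (Fin 3)) :
    pauliVec t * pauliVec t = ((‖t‖ : ℂ) * ‖t‖) • 1 := by
  have hnorm : (‖t‖ : ℂ) * ‖t‖ = t 0 ^ 2 + t 1 ^ 2 + t 2 ^ 2 := by
    rw [← sq]
    exact_mod_cast (EuclideanSpace.real_norm_sq_eq t).trans (Fin.sum_univ_three _)
  rw [hnorm, pauliVec_eq, mul_fin_two, one_fin_two]
  simp only [smul_of, smul_cons, smul_empty, smul_eq_mul, mul_one, mul_zero,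
    EmbeddingLike.apply_eq_iff_eq, vecCons_inj, and_true]
  refine ⟨⟨?_, ?_⟩, ?_, ?_⟩ <;> grind [Complex.I_sq]

lemma traceNorm_half_smul_pauliVec (t : EuclideanSpace ℝ (Fin 3)) :
    traceNorm ((1 / 2 : ℂ) • pauliVec t) = ‖t‖ := by
  have hB : (((‖t‖ / 2 : ℝ) : ℂ) • (1 : Matrix (Fin 2) (Fin 2) ℂ)).PosSemidef :=
    PosSemidef.one.smul (by exact_mod_cast (by positivity : 0 ≤ ‖t‖ / 2))
  rw [traceNorm_eq_trace_re hB]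
  · simp
  · have hhalf : star (1 / 2 : ℂ) = 1 / 2 := by simp
    rw [conjTranspose_smul, hhalf, (isHermitian_pauliVec t).eq, smul_mul_smul_comm,
      pauliVec_mul_self, smul_mul_smul_comm, mul_one, smul_smul]
    congr 1
    push_cast
    ring

theorem traceNorm_blochMatrix_sub (r s : EuclideanSpace ℝ (Fin 3)) :
    traceNorm (blochMatrix r - blochMatrix s) = dist r s := by
  rw [blochMatrix, blochMatrix, ← smul_sub, add_sub_add_left_eq_sub, ← pauliVec_sub,
    traceNorm_half_smul_pauliVec, dist_eq_norm]

lemma ofReal_blochVector {ρ : Matrix (Fin 2) (Fin 2) ℂ} (hρ : ρ.IsHermitian) (K : Fin 3) :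
    (blochVector ρ K : ℂ) = (pauli K * ρ).trace := by
  have hreal : star (pauli K * ρ).trace = (pauli K * ρ).trace := by
    rw [← trace_conjTranspose, conjTranspose_mul, hρ.eq, (isHermitian_pauli K).eq, trace_mul_comm]
  exact Complex.conj_eq_iff_re.1 hreal

theorem blochMatrix_blochVector {ρ : Matrix (Fin 2) (Fin 2) ℂ} (hρ : ρ.IsHermitian)
    (htr : ρ.trace = 1) : blochMatrix (blochVector ρ) = ρ := by
  have hX : (blochVector ρ 0 : ℂ) = ρ 1 0 + ρ 0 1 := by
    simp [ofReal_blochVector hρ, pauli, trace_fin_two, vecMul, dotProduct, Fin.sum_univ_two]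
  have hY : (blochVector ρ 1 : ℂ) = Complex.I * (ρ 0 1 - ρ 1 0) := by
    rw [ofReal_blochVector hρ, trace_fin_two, Matrix.mul_apply, Matrix.mul_apply,
      Fin.sum_univ_two, Fin.sum_univ_two]
    simp only [pauli, cons_val, of_apply]
    ring
  have hZ : (blochVector ρ 2 : ℂ) = ρ 0 0 - ρ 1 1 := by
    simp [ofReal_blochVector hρ, pauli, trace_fin_two, vecMul, dotProduct, Fin.sum_univ_two,
      sub_eq_add_neg]
  rw [trace_fin_two] at htr
  conv_rhs => rw [eta_fin_two ρ]
  rw [blochMatrix, pauliVec_eq, hX, hY, hZ, one_fin_two]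
  simp only [of_add_of, add_cons, head_cons, tail_cons, empty_add_empty, smul_of, smul_cons,
    smul_empty, smul_eq_mul, EmbeddingLike.apply_eq_iff_eq, vecCons_inj, and_true]
  refine ⟨⟨?_, ?_⟩, ?_, ?_⟩ <;> grind [Complex.I_sq]

end Bloch

section Concentration

variable {Ω : Type*} [MeasurableSpace Ω] {μ : Measure Ω}

lemma measureReal_le_abs_dist_sub_dist_le [IsFiniteMeasure μ] {E : Type*} [PseudoMetricSpace E]
    (U V : Ω → E) (x y : E) (ε : ℝ) :
    μ.real {ω | ε ≤ |dist (U ω) (V ω) - dist x y|} ≤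
      μ.real {ω | ε / 2 ≤ dist (U ω) x} + μ.real {ω | ε / 2 ≤ dist (V ω) y} := by
  refine (measureReal_mono fun ω hω => ?_).trans (measureReal_union_le _ _)
  simp only [Set.mem_union, Set.mem_ofPred_eq] at hω ⊢
  have htri := dist_dist_dist_le (U ω) (V ω) x y
  rw [Real.dist_eq] at htri
  by_contra! hlt
  linarith

lemma exists_norm_le_sqrt_card_mul_abs {ι : Type*} [Fintype ι] [Nonempty ι]
    (x : EuclideanSpace ℝ ι) : ∃ i, ‖x‖ ≤ √(Fintype.card ι) * |x i| := by
  have h := (EuclideanSpace.basisFun ι ℝ).norm_le_card_mul_iSup_norm_inner x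
  obtain ⟨i, hi⟩ := exists_eq_ciSup_of_finite
    (f := fun i => ‖inner ℝ (EuclideanSpace.basisFun ι ℝ i) x‖)
  refine ⟨i, ?_⟩
  rw [← hi] at h
  simpa using h

lemma hasSubgaussianMGF_sub_of_mem_Icc_neg_one_one [IsProbabilityMeasure μ] {Z : Ω → ℝ} {p : ℝ}
    (hmeas : AEMeasurable Z μ) (hbdd : ∀ᵐ ω ∂μ, Z ω ∈ Set.Icc (-1 : ℝ) 1)
    (hmean : ∫ ω, Z ω ∂μ = p) : HasSubgaussianMGF (fun ω => Z ω - p) 1 μ := by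
  convert hasSubgaussianMGF_of_mem_Icc hmeas hbdd using 1
  · rw [hmean]
  · ext
    norm_num

variable {ι κ κ' : Type*} [Fintype κ] [Fintype κ'] {v : NNReal}

lemma measureReal_le_abs_sum_le {W : κ → Ω → ℝ} (hindep : iIndepFun W μ)
    (hsub : ∀ ℓ, HasSubgaussianMGF (W ℓ) v μ) {t : ℝ} (ht : 0 ≤ t) :
    μ.real {ω | t ≤ |∑ ℓ, W ℓ ω|} ≤ 2 * Real.exp (-t ^ 2 / (2 * (Fintype.card κ * v))) := by
  have : IsProbabilityMeasure μ := hindep.isProbabilityMeasure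
  have hsum : HasSubgaussianMGF (fun ω => ∑ ℓ, W ℓ ω) (Fintype.card κ * v) μ := by
    simpa using HasSubgaussianMGF.sum_of_iIndepFun hindep (c := fun _ => v) (s := Finset.univ)
      fun ℓ _ => hsub ℓ
  have hcover : {ω | t ≤ |∑ ℓ, W ℓ ω|} ⊆
      {ω | t ≤ ∑ ℓ, W ℓ ω} ∪ {ω | t ≤ (-fun ω => ∑ ℓ, W ℓ ω) ω} := fun ω hω => by
    simpa only [Set.mem_union, Set.mem_ofPred_eq, Pi.neg_apply] using le_abs.1 hω.out
  have hupper := hsum.measure_ge_le ht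
  have hlower := hsum.neg.measure_ge_le ht
  push_cast at hupper hlower
  linarith [(measureReal_mono (μ := μ) hcover).trans (measureReal_union_le _ _)]

/-- The empirical mean of a sample `(X · ℓ)_ℓ` of random vectors, taken axis by axis; it is `0`
for the empty sample. -/
noncomputable def sampleMean (X : ι → κ → Ω → ℝ) (ω : Ω) : EuclideanSpace ℝ ι :=
  WithLp.toLp 2 fun i => (Fintype.card κ : ℝ)⁻¹ * ∑ ℓ, X i ℓ ω

lemma measureReal_le_abs_sampleMean_sub_le {X : ι → κ → Ω → ℝ} {r : EuclideanSpace ℝ ι} {i : ι}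
    (hindep : iIndepFun (X i) μ) (hsub : ∀ ℓ, HasSubgaussianMGF (fun ω => X i ℓ ω - r i) v μ)
    {δ : ℝ} (hδ : 0 ≤ δ) :
    μ.real {ω | δ ≤ |sampleMean X ω i - r i|} ≤
      2 * Real.exp (-(Fintype.card κ * δ ^ 2) / (2 * v)) := by
  have : IsProbabilityMeasure μ := hindep.isProbabilityMeasure
  have hcentred : iIndepFun (fun ℓ ω => X i ℓ ω - r i) μ :=
    hindep.comp (fun _ x => x - r i) fun _ => by fun_prop
  have hsubset : {ω | δ ≤ |sampleMean X ω i - r i|} ⊆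
      {ω | Fintype.card κ * δ ≤ |∑ ℓ, (X i ℓ ω - r i)|} := fun ω hω => by
    have hsum : ∑ ℓ, (X i ℓ ω - r i) = Fintype.card κ * (sampleMean X ω i - r i) := by
      rcases isEmpty_or_nonempty κ with _ | _
      · simp
      · simp only [Finset.sum_sub_distrib, Finset.sum_const, Finset.card_univ, nsmul_eq_mul,
          sampleMean]
        field_simp
    rw [Set.mem_ofPred_eq, hsum, abs_mul, Nat.abs_cast]
    exact mul_le_mul_of_nonneg_left hω (Nat.cast_nonneg _)
  have hexponent : -(Fintype.card κ * δ) ^ 2 / (2 * (Fintype.card κ * v)) =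
      -(Fintype.card κ * δ ^ 2) / (2 * v) := by
    rcases isEmpty_or_nonempty κ with _ | _
    · simp
    · field_simp
  calc μ.real {ω | δ ≤ |sampleMean X ω i - r i|}
      ≤ μ.real {ω | Fintype.card κ * δ ≤ |∑ ℓ, (X i ℓ ω - r i)|} := measureReal_mono hsubset
    _ ≤ 2 * Real.exp (-(Fintype.card κ * δ) ^ 2 / (2 * (Fintype.card κ * v))) :=
        measureReal_le_abs_sum_le hcentred hsub (by positivity)
    _ = 2 * Real.exp (-(Fintype.card κ * δ ^ 2) / (2 * v)) := by rw [hexponent]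

variable [Fintype ι] [Nonempty ι]

theorem measureReal_le_dist_sampleMean_le {X : ι → κ → Ω → ℝ} {r : EuclideanSpace ℝ ι}
    (hindep : ∀ i, iIndepFun (X i) μ)
    (hsub : ∀ i ℓ, HasSubgaussianMGF (fun ω => X i ℓ ω - r i) v μ) {δ : ℝ} (hδ : 0 ≤ δ) :
    μ.real {ω | δ ≤ dist (sampleMean X ω) r} ≤
      2 * Fintype.card ι * Real.exp (-(Fintype.card κ * δ ^ 2) / (2 * v * Fintype.card ι)) := by
  have : IsProbabilityMeasure μ := (hindep (Classical.arbitrary ι)).isProbabilityMeasure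
  have hcover : {ω | δ ≤ dist (sampleMean X ω) r} ⊆
      ⋃ i, {ω | δ / √(Fintype.card ι) ≤ |sampleMean X ω i - r i|} := fun ω hω => by
    obtain ⟨i, hi⟩ := exists_norm_le_sqrt_card_mul_abs (sampleMean X ω - r)
    rw [← dist_eq_norm] at hi
    exact Set.mem_iUnion.2 ⟨i, (div_le_iff₀' (by positivity)).2 (hω.out.trans hi)⟩
  calc μ.real {ω | δ ≤ dist (sampleMean X ω) r}
      ≤ ∑ i, μ.real {ω | δ / √(Fintype.card ι) ≤ |sampleMean X ω i - r i|} :=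
        (measureReal_mono hcover).trans (measureReal_iUnion_fintype_le _)
    _ ≤ ∑ _i : ι,
          2 * Real.exp (-(Fintype.card κ * (δ / √(Fintype.card ι)) ^ 2) / (2 * v)) :=
        Finset.sum_le_sum fun i _ =>
          measureReal_le_abs_sampleMean_sub_le (hindep i) (hsub i) (by positivity)
    _ = 2 * Fintype.card ι *
          Real.exp (-(Fintype.card κ * δ ^ 2) / (2 * v * Fintype.card ι)) := by
        rw [Finset.sum_const, Finset.card_univ, nsmul_eq_mul, div_pow,
          Real.sq_sqrt (Nat.cast_nonneg _)]
        ring_nf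

theorem measureReal_le_abs_dist_sampleMean_sub_dist_le {X : ι → κ → Ω → ℝ} {Y : ι → κ' → Ω → ℝ}
    {r s : EuclideanSpace ℝ ι}
    (hindepX : ∀ i, iIndepFun (X i) μ) (hindepY : ∀ i, iIndepFun (Y i) μ)
    (hsubX : ∀ i ℓ, HasSubgaussianMGF (fun ω => X i ℓ ω - r i) v μ)
    (hsubY : ∀ i ℓ, HasSubgaussianMGF (fun ω => Y i ℓ ω - s i) v μ)
    {N ε : ℝ} (hNX : N ≤ Fintype.card κ) (hNY : N ≤ Fintype.card κ') (hε : 0 ≤ ε) :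
    μ.real {ω | ε ≤ |dist (sampleMean X ω) (sampleMean Y ω) - dist r s|} ≤
      4 * Fintype.card ι * Real.exp (-(N * ε ^ 2) / (8 * v * Fintype.card ι)) := by
  have : IsProbabilityMeasure μ := (hindepX (Classical.arbitrary ι)).isProbabilityMeasure
  have hmono {M : ℝ} (hM : N ≤ M) :
      2 * Fintype.card ι * Real.exp (-(M * (ε / 2) ^ 2) / (2 * v * Fintype.card ι)) ≤
        2 * Fintype.card ι * Real.exp (-(N * ε ^ 2) / (8 * v * Fintype.card ι)) := by
    have hexponent : -(M * (ε / 2) ^ 2) / (2 * v * Fintype.card ι) =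
        -(M * ε ^ 2) / (8 * v * Fintype.card ι) := by ring
    rw [hexponent]
    gcongr
  have hX := measureReal_le_dist_sampleMean_le hindepX hsubX (by positivity : 0 ≤ ε / 2)
  have hY := measureReal_le_dist_sampleMean_le hindepY hsubY (by positivity : 0 ≤ ε / 2)
  linarith [measureReal_le_abs_dist_sub_dist_le (μ := μ) (sampleMean X) (sampleMean Y) r s ε,
    hX.trans (hmono hNX), hY.trans (hmono hNY)]

end Concentration

lemma mul_exp_neg_mul_sq_sqrt_log_div {A B α k : ℝ} (hα : 0 < α) (hαA : α ≤ A) (hB : 0 < B)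
    (hk : 0 < k) : A * Real.exp (-k * √(B * Real.log (A / α) / k) ^ 2 / B) = α := by
  have hlog : 0 ≤ Real.log (A / α) := Real.log_nonneg ((one_le_div₀ hα).2 hαA)
  have hexponent : -k * √(B * Real.log (A / α) / k) ^ 2 / B = -Real.log (A / α) := by
    rw [Real.sq_sqrt (by positivity)]
    field_simp
  have hA : 0 < A := hα.trans_le hαA
  rw [hexponent, Real.exp_neg, Real.exp_log (by positivity)]
  field_simp

theorem measure_le_abs_traceNorm_sub_traceNorm_le {Ω : Type*} [MeasurableSpace Ω]
    {μ : Measure Ω} {σ ρ : Matrix (Fin 2) (Fin 2) ℂ} (hσ : σ.IsHermitian) (hσtr : σ.trace = 1)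
    (hρ : ρ.IsHermitian) (hρtr : ρ.trace = 1) {n₁ n₂ : ℕ}
    {X : Fin 3 → Fin n₁ → Ω → ℝ} {Y : Fin 3 → Fin n₂ → Ω → ℝ}
    (hindepX : ∀ K, iIndepFun (X K) μ) (hindepY : ∀ K, iIndepFun (Y K) μ)
    (hsubX : ∀ K ℓ, HasSubgaussianMGF (fun ω => X K ℓ ω - (pauli K * σ).trace.re) 1 μ)
    (hsubY : ∀ K ℓ, HasSubgaussianMGF (fun ω => Y K ℓ ω - (pauli K * ρ).trace.re) 1 μ)
    {B ε : ℝ} (hB : 72 ≤ B) (hε : 0 ≤ ε) :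
    μ {ω | ε ≤ |traceNorm (blochMatrix (sampleMean X ω) - blochMatrix (sampleMean Y ω)) -
        traceNorm (ρ - σ)|} ≤
      ENNReal.ofReal (12 * Real.exp (-(min (3 * n₁) (3 * n₂) : ℕ) * ε ^ 2 / B)) := by
  have : IsProbabilityMeasure μ := (hindepX 0).isProbabilityMeasure
  have hdist : traceNorm (ρ - σ) = dist (blochVector σ) (blochVector ρ) := by
    rw [dist_comm, ← traceNorm_blochMatrix_sub, blochMatrix_blochVector hσ hσtr,
      blochMatrix_blochVector hρ hρtr]
  simp only [hdist, traceNorm_blochMatrix_sub]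
  rw [← ofReal_measureReal]
  refine ENNReal.ofReal_le_ofReal ?_
  calc μ.real {ω | ε ≤ |dist (sampleMean X ω) (sampleMean Y ω) -
        dist (blochVector σ) (blochVector ρ)|}
      ≤ 4 * Fintype.card (Fin 3) *
          Real.exp (-((min n₁ n₂ : ℕ) * ε ^ 2) / (8 * (1 : NNReal) * Fintype.card (Fin 3))) :=
        measureReal_le_abs_dist_sampleMean_sub_dist_le hindepX hindepY hsubX hsubY
          (by simp) (by simp) hε
    _ = 12 * Real.exp (-((min (3 * n₁) (3 * n₂) : ℕ) * ε ^ 2 / 72)) := by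
        rw [Nat.mul_min_mul_left, Fintype.card_fin]
        push_cast
        ring_nf
    _ ≤ 12 * Real.exp (-((min (3 * n₁) (3 * n₂) : ℕ) * ε ^ 2 / B)) := by gcongr
    _ = 12 * Real.exp (-(min (3 * n₁) (3 * n₂) : ℕ) * ε ^ 2 / B) := by ring_nf

theorem qubit_two_sample_test_general {Ω : Type*} [MeasurableSpace Ω] (μ : Measure Ω)
    (σ ρ : Matrix (Fin 2) (Fin 2) ℂ) (hσ : σ.IsHermitian) (hσtr : σ.trace = 1)
    (hρ : ρ.IsHermitian) (hρtr : ρ.trace = 1)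
    (n₁ n₂ : ℕ) (hn₁ : 1 ≤ n₁) (hn₂ : 1 ≤ n₂) (k : ℕ) (hk : k = min (3 * n₁) (3 * n₂))
    (X : Fin 3 → Fin n₁ → Ω → ℝ) (Y : Fin 3 → Fin n₂ → Ω → ℝ)
    (hsubX : ∀ K ℓ, HasSubgaussianMGF (fun ω => X K ℓ ω - (pauli K * σ).trace.re) 1 μ)
    (hsubY : ∀ K ℓ, HasSubgaussianMGF (fun ω => Y K ℓ ω - (pauli K * ρ).trace.re) 1 μ)
    (hindepX : ∀ K, iIndepFun (X K) μ) (hindepY : ∀ K, iIndepFun (Y K) μ)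
    (sigmahat rhohat : Ω → Matrix (Fin 2) (Fin 2) ℂ)
    (hsig : ∀ ω, sigmahat ω = blochMatrix (sampleMean X ω))
    (hrho : ∀ ω, rhohat ω = blochMatrix (sampleMean Y ω))
    (α : ℝ) (hα : α ∈ Set.Ioc (0 : ℝ) 12) (B : ℝ) (hB : 72 ≤ B)
    (c : ℝ) (hc : c = √(B * Real.log (12 / α) / k)) :
    (σ = ρ → μ {ω | traceNorm (sigmahat ω - rhohat ω) > c} ≤ ENNReal.ofReal α) ∧
    (c < traceNorm (ρ - σ) →
      μ {ω | traceNorm (sigmahat ω - rhohat ω) ≤ c} ≤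
        ENNReal.ofReal (12 * Real.exp (-(k : ℝ) * (traceNorm (ρ - σ) - c) ^ 2 / B))) := by
  have hconc (ε : ℝ) (hε : 0 ≤ ε) :
      μ {ω | ε ≤ |traceNorm (sigmahat ω - rhohat ω) - traceNorm (ρ - σ)|} ≤
        ENNReal.ofReal (12 * Real.exp (-(k : ℝ) * ε ^ 2 / B)) := by
    simp only [hsig, hrho, hk]
    exact measure_le_abs_traceNorm_sub_traceNorm_le hσ hσtr hρ hρtr hindepX hindepY
      hsubX hsubY hB hε
  constructor
  · rintro rfl
    have hk₀ : (0 : ℝ) < k := by exact_mod_cast (by omega : 0 < k)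
    have hlevel : 12 * Real.exp (-(k : ℝ) * c ^ 2 / B) = α := by
      rw [hc, mul_exp_neg_mul_sq_sqrt_log_div hα.1 hα.2 (by linarith) hk₀]
    refine (measure_mono fun ω (hω : c < _) => ?_).trans
      ((hconc c (hc ▸ Real.sqrt_nonneg _)).trans_eq (by rw [hlevel]))
    have hzero : traceNorm (σ - σ) = 0 := by
      rw [← blochMatrix_blochVector hσ hσtr, traceNorm_blochMatrix_sub, dist_self]
    rw [Set.mem_ofPred_eq, hzero, sub_zero]
    exact hω.le.trans (le_abs_self _)
  · intro hlt
    refine (measure_mono fun ω (hω : _ ≤ c) => ?_).trans (hconc _ (sub_nonneg.2 hlt.le))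
    rw [Set.mem_ofPred_eq, abs_sub_comm]
    exact (sub_le_sub_left hω _).trans (le_abs_self _)

/-- Qubit two-sample universal test via Pauli tomography on both samples: accepting `H₀` iff
`‖σ̂_m − ρ̂_n‖₁ ≤ c` with `c = √(216·ln(12/α)/k)`, `k = min{m,n}`, gives type I error at most `α`
and type II error at most `12·exp(−k·(‖ρ−σ‖₁−c)²/216)`. -/
theorem qubit_two_sample_test
    {Ω : Type*} [MeasurableSpace Ω] (μ : Measure Ω) [IsProbabilityMeasure μ]
    (σ ρ : Matrix (Fin 2) (Fin 2) ℂ)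
    (hσ : σ.PosSemidef) (hσtr : σ.trace = 1)
    (hρ : ρ.PosSemidef) (hρtr : ρ.trace = 1)
    (n₁ n₂ : ℕ) (hn₁ : 1 ≤ n₁) (hn₂ : 1 ≤ n₂)
    (m n : ℕ) (hm : m = 3 * n₁) (hn : n = 3 * n₂) (k : ℕ) (hk : k = min m n)
    (X : Fin 3 → Fin n₁ → Ω → ℝ) (Y : Fin 3 → Fin n₂ → Ω → ℝ)
    (hmeasX : ∀ K ℓ, Measurable (X K ℓ)) (hmeasY : ∀ K ℓ, Measurable (Y K ℓ))
    (hbddX : ∀ K ℓ ω, X K ℓ ω ∈ Set.Icc (-1 : ℝ) 1)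
    (hbddY : ∀ K ℓ ω, Y K ℓ ω ∈ Set.Icc (-1 : ℝ) 1)
    (hmeanX : ∀ K ℓ, ∫ ω, X K ℓ ω ∂μ = ((pauli K) * σ).trace.re)
    (hmeanY : ∀ K ℓ, ∫ ω, Y K ℓ ω ∂μ = ((pauli K) * ρ).trace.re)
    (hidentX : ∀ K ℓ ℓ', IdentDistrib (X K ℓ) (X K ℓ') μ μ)
    (hidentY : ∀ K ℓ ℓ', IdentDistrib (Y K ℓ) (Y K ℓ') μ μ)
    (hindep : iIndepFun
      (Sum.elim (fun p : Fin 3 × Fin n₁ => X p.1 p.2) (fun p : Fin 3 × Fin n₂ => Y p.1 p.2)) μ)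
    (rhat shat : Fin 3 → Ω → ℝ)
    (hrhat : ∀ K ω, rhat K ω = (1 / n₁ : ℝ) * ∑ ℓ, X K ℓ ω)
    (hshat : ∀ K ω, shat K ω = (1 / n₂ : ℝ) * ∑ ℓ, Y K ℓ ω)
    (sigmahat rhohat : Ω → Matrix (Fin 2) (Fin 2) ℂ)
    (hsig : ∀ ω, sigmahat ω = (1 / 2 : ℂ) • (1 + ∑ K, (rhat K ω : ℂ) • pauli K))
    (hrho : ∀ ω, rhohat ω = (1 / 2 : ℂ) • (1 + ∑ K, (shat K ω : ℂ) • pauli K))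
    (α : ℝ) (hα : α ∈ Set.Ioo (0 : ℝ) 1)
    (c : ℝ) (hc : c = Real.sqrt (216 * Real.log (12 / α) / k)) :
    (σ = ρ → μ {ω | traceNorm (sigmahat ω - rhohat ω) > c} ≤ ENNReal.ofReal α) ∧
    (σ ≠ ρ → c < traceNorm (ρ - σ) →
      μ {ω | traceNorm (sigmahat ω - rhohat ω) ≤ c} ≤
        ENNReal.ofReal (12 * Real.exp (-(k : ℝ) * (traceNorm (ρ - σ) - c) ^ 2 / 216))) := by
  have hindX (K : Fin 3) : iIndepFun (X K) μ :=
    hindep.precomp (g := fun ℓ => Sum.inl (K, ℓ)) fun _ _ h => by simpa using h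
  have hindY (K : Fin 3) : iIndepFun (Y K) μ :=
    hindep.precomp (g := fun ℓ => Sum.inr (K, ℓ)) fun _ _ h => by simpa using h
  have htest := qubit_two_sample_test_general μ σ ρ hσ.1 hσtr hρ.1 hρtr n₁ n₂ hn₁ hn₂ k
    (by rw [hk, hm, hn]) X Y
    (fun K ℓ => hasSubgaussianMGF_sub_of_mem_Icc_neg_one_one (hmeasX K ℓ).aemeasurable
      (.of_forall (hbddX K ℓ)) (hmeanX K ℓ))
    (fun K ℓ => hasSubgaussianMGF_sub_of_mem_Icc_neg_one_one (hmeasY K ℓ).aemeasurable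
      (.of_forall (hbddY K ℓ)) (hmeanY K ℓ))
    hindX hindY sigmahat rhohat
    (fun ω => by simp [hsig, hrhat, blochMatrix, pauliVec, sampleMean])
    (fun ω => by simp [hrho, hshat, blochMatrix, pauliVec, sampleMean])
    α ⟨hα.1, by linarith [hα.2]⟩ 216 (by norm_num) c hc
  exact ⟨htest.1, fun _ => htest.2⟩
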